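/- Let S = (S, I, O, G, D, h) be a weakly-complete deterministic TFSM with output delays all of whose guards are half-open intervals [u,v) with integers 0 ≤ u < v, let s and s' be states of S, and let α be a timed input sequence with α ∈ Dom(s) = Dom(s'). If timed_out_S(s,α) ≠ timed_out_S(s',α), then out_{R(S)}(s,[α]_{I_G}) ≠ out_{R(S)}(s',[α]_{I_G}). -/

import Mathlib

/-!
The timed output of a run depends only on the input timestamps and on the sequence of pairs
(output, delay) of the transitions taken, and that sequence is exactly what the region FSM
produces on the untimed projection. The point is that a cell `g` of the partition `Ḡ_i` contains
no boundary point in its interior, so a guard on input `i` that meets `g` contains it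
(`guardSub_of_mem`). Hence the runs of `R(S)` on `[α]_{I_G}` correspond to the runs of the TFSM on
`α` (`fRunTo_region_iff`), and `timed_out(s, α)` is a function of `out(s, [α]_{I_G})` and `α`
alone (`timedOut_eq`). The theorem is the contrapositive.
-/

/-- A timed guard: an interval with natural-number endpoints, left-closed, and
either right-open (`rightClosed = false`, i.e. `[lo, hi)`) or right-closed
(`rightClosed = true`, i.e. `[lo, hi]`; point intervals are `[u,u]`). -/
structure Guard where
  lo : ℕ
  hi : ℕ
  rightClosed : Bool
deriving DecidableEq

/-- Membership of a timestamp in a guard. -/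
def GuardMem (g : Guard) (t : ℝ) : Prop :=
  (g.lo : ℝ) ≤ t ∧ (if g.rightClosed then t ≤ (g.hi : ℝ) else t < (g.hi : ℝ))

/-- Guard inclusion (as sets of timestamps). -/
def GuardSub (g g' : Guard) : Prop := ∀ t : ℝ, GuardMem g t → GuardMem g' t

/-- A transition of a TFSM with output delays: source state, input, timed guard,
output, positive integer output delay, destination state. -/
structure TTrans (S I O : Type) where
  src : S
  inp : I
  guard : Guard
  out : O
  delay : ℕ+
  dst : S

/-- A TFSM with output delays over states `S`, inputs `I`, outputs `O`,
given by its transition relation. -/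
abbrev TFSM (S I O : Type) := Set (TTrans S I O)

variable {S I O A B : Type}

/-- Determinism: any two distinct transitions from the same state on the same input
have disjoint guards. -/
def TFSMDeterministic (M : TFSM S I O) : Prop :=
  ∀ tr ∈ M, ∀ tr' ∈ M, tr.src = tr'.src → tr.inp = tr'.inp → tr ≠ tr' →
    ∀ t : ℝ, ¬ (GuardMem tr.guard t ∧ GuardMem tr'.guard t)

/-- A timed input sequence: nonnegative, nondecreasing timestamps. -/
def IsTimedInputSeq (α : List (I × ℝ)) : Prop :=
  (∀ p ∈ α, 0 ≤ p.2) ∧ List.Chain' (· ≤ ·) (α.map Prod.snd)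

/-- `TRunTo M s t0 α trs sf`: starting at state `s` at time `t0`, the timed input
sequence `α` induces the sequence of transitions `trs`, ending at state `sf`. -/
inductive TRunTo (M : TFSM S I O) : S → ℝ → List (I × ℝ) → List (TTrans S I O) → S → Prop
  | nil (s : S) (t0 : ℝ) : TRunTo M s t0 [] [] s
  | cons {s sf : S} {t0 t : ℝ} {i : I} {tr : TTrans S I O}
      {rest : List (I × ℝ)} {trs : List (TTrans S I O)} :
      tr ∈ M → tr.src = s → tr.inp = i → GuardMem tr.guard (t - t0) →
      TRunTo M tr.dst t rest trs sf →
      TRunTo M s t0 ((i, t) :: rest) (tr :: trs) sf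

/-- `α` induces the sequence of transitions `trs` from state `s`. -/
def TInduces (M : TFSM S I O) (s : S) (α : List (I × ℝ)) (trs : List (TTrans S I O)) : Prop :=
  ∃ sf : S, TRunTo M s 0 α trs sf

/-- `Dom(s)`: the timed input sequences inducing at least one sequence of transitions from `s`. -/
def TDom (M : TFSM S I O) (s : S) : Set (List (I × ℝ)) :=
  { α | IsTimedInputSeq α ∧ ∃ trs, TInduces M s α trs }

/-- `next_state(s, α) = sf` (as a relation, since `next_state` is partial). -/
def TReaches (M : TFSM S I O) (s : S) (α : List (I × ℝ)) (sf : S) : Prop :=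
  ∃ trs, TRunTo M s 0 α trs sf

/-- The timed outputs of a run: the `j`-th transition produces its output at time
`t_j + d_j`. -/
def rawOutputs (α : List (I × ℝ)) (trs : List (TTrans S I O)) : List (O × ℝ) :=
  List.zipWith (fun p tr => (tr.out, p.2 + ((tr.delay : ℕ) : ℝ))) α trs

/-- `timed_out(s, α)`: all time-sorted reorderings of the timed outputs of the run of `α` at `s`. -/
def timedOut (M : TFSM S I O) (s : S) (α : List (I × ℝ)) : Set (List (O × ℝ)) :=
  { β | ∃ trs sf, TRunTo M s 0 α trs sf ∧ List.Perm β (rawOutputs α trs) ∧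
        List.Chain' (· ≤ ·) (β.map Prod.snd) }

/-- Homing sequence for a TFSM with output delays. -/
def THoming (M : TFSM S I O) (α : List (I × ℝ)) : Prop :=
  IsTimedInputSeq α ∧ ∀ s1 s2 : S, timedOut M s1 α = timedOut M s2 α →
    ∃ sf : S, TReaches M s1 α sf ∧ TReaches M s2 α sf

/-- Synchronizing sequence for a TFSM with output delays. -/
def TSync (M : TFSM S I O) (α : List (I × ℝ)) : Prop :=
  IsTimedInputSeq α ∧ ∃ sf : S, ∀ s : S, TReaches M s α sf

/-- A timed input sequence is non-integer if the difference of any two distinct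
timestamps is not an integer. -/
def NonInteger (α : List (I × ℝ)) : Prop :=
  ∀ j k : Fin α.length, j ≠ k → ∀ z : ℤ, (α.get j).2 - (α.get k).2 ≠ (z : ℝ)

/-- A transition of an (untimed) FSM. -/
structure FTrans (S A B : Type) where
  src : S
  inp : A
  out : B
  dst : S

/-- An (untimed) FSM given by its transition relation. -/
abbrev UntimedFSM (S A B : Type) := Set (FTrans S A B)

/-- FSM run: input sequence, produced output sequence, final state. -/
inductive FRunTo (T : UntimedFSM S A B) : S → List A → List B → S → Prop
  | nil (s : S) : FRunTo T s [] [] s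
  | cons {s sf : S} {a : A} {rest : List A} {γ : List B} {f : FTrans S A B} :
      f ∈ T → f.src = s → f.inp = a → FRunTo T f.dst rest γ sf →
      FRunTo T s (a :: rest) (f.out :: γ) sf

def FReaches (T : UntimedFSM S A B) (s : S) (β : List A) (sf : S) : Prop :=
  ∃ γ, FRunTo T s β γ sf

/-- `out(s, β)` for an FSM (a set, i.e. a partial value, since the FSM may be partial). -/
def FOut (T : UntimedFSM S A B) (s : S) (β : List A) : Set (List B) :=
  { γ | ∃ sf, FRunTo T s β γ sf }

def FDeterministic (T : UntimedFSM S A B) : Prop :=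
  ∀ f ∈ T, ∀ f' ∈ T, f.src = f'.src → f.inp = f'.inp → f = f'

/-- Completeness of an FSM relative to an input alphabet `A0`. -/
def FCompleteOn (T : UntimedFSM S A B) (A0 : Set A) : Prop :=
  ∀ s : S, ∀ a ∈ A0, ∃ f ∈ T, f.src = s ∧ f.inp = a

/-- Synchronizing sequence for an FSM. -/
def FSync (T : UntimedFSM S A B) (β : List A) : Prop :=
  ∃ sf : S, ∀ s : S, FReaches T s β sf

/-- Homing sequence for an FSM. -/
def FHoming (T : UntimedFSM S A B) (β : List A) : Prop :=
  ∀ s1 s2 : S, FOut T s1 β = FOut T s2 β →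
    ∃ sf : S, FReaches T s1 β sf ∧ FReaches T s2 β sf

/-- The guards appearing on transitions labeled with input `i`. -/
def guardsOf (M : TFSM S I O) (i : I) : Set Guard :=
  { g | ∃ tr ∈ M, tr.inp = i ∧ tr.guard = g }

/-- Boundary points of the guards labeled `i`. -/
def boundaries (M : TFSM S I O) (i : I) : Set ℕ :=
  { p | ∃ g ∈ guardsOf M i, g.lo = p ∨ g.hi = p }

/-- `Ḡ_i`: the half-open intervals determined by consecutive boundary points of `G_i`. -/
def refinedGuards (M : TFSM S I O) (i : I) : Set Guard :=
  { g | g.rightClosed = false ∧ g.lo ∈ boundaries M i ∧ g.hi ∈ boundaries M i ∧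
        g.lo < g.hi ∧ ∀ r ∈ boundaries M i, ¬ (g.lo < r ∧ r < g.hi) }

/-- The abstract input alphabet `I_G = {(i, g) : g ∈ Ḡ_i}`. -/
def absInputs (M : TFSM S I O) : Set (I × Guard) :=
  { p | p.2 ∈ refinedGuards M p.1 }

/-- The region FSM `R(S)` of a TFSM with output delays. -/
def regionFSM (M : TFSM S I O) : UntimedFSM S (I × Guard) (O × ℕ+) :=
  { f | f.inp ∈ absInputs M ∧ ∃ tr ∈ M, tr.src = f.src ∧ tr.inp = f.inp.1 ∧
        tr.out = f.out.1 ∧ tr.delay = f.out.2 ∧ tr.dst = f.dst ∧ GuardSub f.inp.2 tr.guard }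

/-- All guards are half-open intervals `[u, v)` with `u < v`. -/
def HalfOpenGuards (M : TFSM S I O) : Prop :=
  ∀ tr ∈ M, tr.guard.rightClosed = false ∧ tr.guard.lo < tr.guard.hi

/-- Weak completeness: all states have the same domain. -/
def WeaklyComplete (M : TFSM S I O) : Prop :=
  ∀ s s' : S, TDom M s = TDom M s'

/-- `Projects M t0 α β`: `β` is the untimed projection `[α]_{I_G}` of `α`
(relative to previous timestamp `t0`). -/
inductive Projects (M : TFSM S I O) : ℝ → List (I × ℝ) → List (I × Guard) → Prop
  | nil (t0 : ℝ) : Projects M t0 [] []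
  | cons {t0 t : ℝ} {i : I} {g : Guard} {rest : List (I × ℝ)} {brest : List (I × Guard)} :
      g ∈ refinedGuards M i → GuardMem g (t - t0) →
      Projects M t rest brest →
      Projects M t0 ((i, t) :: rest) ((i, g) :: brest)

/-- All guards are point intervals `[u, u]` with `u` a positive integer. -/
def PointIntervals (M : TFSM S I O) : Prop :=
  ∀ tr ∈ M, tr.guard.rightClosed = true ∧ tr.guard.lo = tr.guard.hi ∧ 0 < tr.guard.lo

/-- The region FSM of a TFSM with only point intervals: abstract inputs are the
(input, guard) pairs appearing on transitions. -/
def pointRegionFSM (M : TFSM S I O) : UntimedFSM S (I × Guard) (O × ℕ+) :=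
  { f | ∃ tr ∈ M, tr.src = f.src ∧ (tr.inp, tr.guard) = f.inp ∧
        (tr.out, tr.delay) = f.out ∧ tr.dst = f.dst }

/-- `t(α)`: the last timestamp of `α` (0 for the empty sequence). -/
def tEnd (α : List (I × ℝ)) : ℝ := (α.map Prod.snd).getLastD 0

/-- The number of timed outputs of the run produced at or after time `t(α)`
(counted with multiplicity). -/
noncomputable def tailCount (α : List (I × ℝ)) (trs : List (TTrans S I O)) : ℕ :=
  ((rawOutputs α trs).filter (fun p => decide (tEnd α ≤ p.2))).length

/-- The timed output tail of a run: the multiset of `(o, τ - t(α))` over timed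
outputs `(o, τ)` of the run with `τ ≥ t(α)`. -/
noncomputable def tailOf (α : List (I × ℝ)) (trs : List (TTrans S I O)) : Multiset (O × ℝ) :=
  ↑(((rawOutputs α trs).filter (fun p => decide (tEnd α ≤ p.2))).map
      (fun p => (p.1, p.2 - tEnd α)))

/-- The set of all timed output tails of the TFSM, together with the empty tail. -/
def Tout (M : TFSM S I O) : Set (Multiset (O × ℝ)) :=
  insert 0 { m | ∃ (s : S) (α : List (I × ℝ)) (trs : List (TTrans S I O)) (sf : S),
    α ∈ TDom M s ∧ TRunTo M s 0 α trs sf ∧ m = tailOf α trs }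

/-- The output delay at state `j` of the machine `B_n`. -/
def BnDelay (n : ℕ) (j : Fin n) : ℕ+ :=
  if (j : ℕ) = n - 2 then 3 else if (j : ℕ) = n - 1 then 1 else 2

/-- The transition of `B_n` out of state `j`. -/
def BnTrans (n : ℕ) [NeZero n] (j : Fin n) : TTrans (Fin n) Unit Unit :=
  ⟨j, (), ⟨1, 1, true⟩, (), BnDelay n j, j + 1⟩

/-- The TFSM `B_n` with only point intervals. -/
def Bn (n : ℕ) [NeZero n] : TFSM (Fin n) Unit Unit := Set.range (BnTrans n)

/-- A transition guard sharing a timestamp with a refined guard contains that refined guard: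
otherwise one of its endpoints would lie strictly between two consecutive boundary points. -/
theorem guardSub_of_mem {M : TFSM S I O} (hho : HalfOpenGuards M) {tr : TTrans S I O}
    (htr : tr ∈ M) {g : Guard} (hg : g ∈ refinedGuards M tr.inp) {x : ℝ}
    (hx : GuardMem g x) (hx' : GuardMem tr.guard x) : GuardSub g tr.guard := by
  obtain ⟨hgr, -, -, -, hno⟩ := hg
  have hlo : tr.guard.lo ∈ boundaries M tr.inp := ⟨_, ⟨tr, htr, rfl, rfl⟩, Or.inl rfl⟩
  have hhi : tr.guard.hi ∈ boundaries M tr.inp := ⟨_, ⟨tr, htr, rfl, rfl⟩, Or.inr rfl⟩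
  simp only [GuardSub, GuardMem, hgr, (hho tr htr).1, Bool.false_eq_true, if_false]
    at hx hx' ⊢
  have h1 : tr.guard.lo < g.hi := by exact_mod_cast hx'.1.trans_lt hx.2
  have h2 : g.lo < tr.guard.hi := by exact_mod_cast hx.1.trans_lt hx'.2
  have h3 : tr.guard.lo ≤ g.lo := not_lt.1 fun h => hno _ hlo ⟨h, h1⟩
  have h4 : g.hi ≤ tr.guard.hi := not_lt.1 fun h => hno _ hhi ⟨h2, h⟩
  exact fun t ht => ⟨(Nat.cast_le.2 h3).trans ht.1, ht.2.trans_le (Nat.cast_le.2 h4)⟩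

/-- The runs of the region FSM on the untimed projection of `α` are the runs of the TFSM on `α`,
with each transition replaced by its pair (output, delay). -/
theorem fRunTo_region_iff {M : TFSM S I O} (hho : HalfOpenGuards M) {t0 : ℝ}
    {α : List (I × ℝ)} {β : List (I × Guard)} (hp : Projects M t0 α β)
    (s : S) (γ : List (O × ℕ+)) (sf : S) :
    FRunTo (regionFSM M) s β γ sf ↔
      ∃ trs, TRunTo M s t0 α trs sf ∧ γ = trs.map fun tr => (tr.out, tr.delay) := by
  induction hp generalizing s γ with
  | nil t0 =>
    constructor
    · rintro ⟨⟩
      exact ⟨[], .nil _ _, rfl⟩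
    · rintro ⟨_, ⟨⟩, rfl⟩
      exact .nil _
  | cons hg hm _ ih =>
    constructor
    · intro h
      cases h with
      | @cons _ _ _ _ γ' f hf hsrc hinp hrun =>
        obtain ⟨fs, fi, ⟨fo, fd⟩, fdst⟩ := f
        obtain ⟨-, tr, htr, h1, h2, h3, h4, h5, h6⟩ := hf
        dsimp only at *
        subst hinp h3 h4 h5
        obtain ⟨trs, hr, rfl⟩ := (ih _ _).1 hrun
        exact ⟨tr :: trs, .cons htr (h1.trans hsrc) h2 (h6 _ hm) hr, rfl⟩
    · rintro ⟨_, h, rfl⟩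
      cases h with
      | @cons _ _ _ _ _ tr _ trs htr hsrc hinp hmem hrun =>
        subst hinp
        exact .cons (f := ⟨tr.src, (tr.inp, _), (tr.out, tr.delay), tr.dst⟩)
          ⟨hg, tr, htr, rfl, rfl, rfl, rfl, rfl, guardSub_of_mem hho htr hg hm hmem⟩
          hsrc rfl ((ih _ _).2 ⟨trs, hrun, rfl⟩)

/-- `timed_out(s, α)` expressed through `out(s, [α]_{I_G})` in the region FSM: the state `s` enters
the right-hand side only through the output set of the region FSM. -/
theorem timedOut_eq {M : TFSM S I O} (hho : HalfOpenGuards M)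
    {α : List (I × ℝ)} {β : List (I × Guard)} (hp : Projects M 0 α β) (s : S) :
    timedOut M s α = { δ | ∃ γ ∈ FOut (regionFSM M) s β,
      List.Perm δ (List.zipWith (fun p od => (od.1, p.2 + ((od.2 : ℕ) : ℝ))) α γ) ∧
      List.Chain' (· ≤ ·) (δ.map Prod.snd) } := by
  ext δ
  constructor
  · rintro ⟨trs, sf, hr, hperm, hc⟩
    refine ⟨_, ⟨sf, (fRunTo_region_iff hho hp _ _ _).2 ⟨trs, hr, rfl⟩⟩, ?_, hc⟩
    rwa [List.zipWith_map_right]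
  · rintro ⟨γ, ⟨sf, hr⟩, hperm, hc⟩
    obtain ⟨trs, hrun, rfl⟩ := (fRunTo_region_iff hho hp _ _ _).1 hr
    rw [List.zipWith_map_right] at hperm
    exact ⟨trs, sf, hrun, hperm, hc⟩

/-- for a weakly-complete deterministic TFSM with half-open guards, states
`s, s'` and `α ∈ Dom(s) = Dom(s')`: if `timed_out_S(s,α) ≠ timed_out_S(s',α)` then
`out_{R(S)}(s,[α]_{I_G}) ≠ out_{R(S)}(s',[α]_{I_G})`. -/
theorem stmt10 {S I O : Type} [Fintype S] [Nonempty S] [Fintype I] [Nonempty I]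
    [Fintype O] [Nonempty O]
    (M : TFSM S I O) (hfin : Set.Finite M) (hdet : TFSMDeterministic M)
    (hwc : WeaklyComplete M) (hho : HalfOpenGuards M)
    (s s' : S) (α : List (I × ℝ)) (hd : α ∈ TDom M s) (hd' : α ∈ TDom M s')
    (hne : timedOut M s α ≠ timedOut M s' α) :
    ∀ β, Projects M 0 α β → FOut (regionFSM M) s β ≠ FOut (regionFSM M) s' β := by
  intro β hp h
  exact hne (by rw [timedOut_eq hho hp, timedOut_eq hho hp, h])
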